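/- Little Picard theorem: every holomorphic function f : ℂ → ℂ that omits the two values 0 and 1 is constant. Equivalently, ℂ \ {0,1} is Picard hyperbolic. -/

import Mathlib

theorem lp_log (f : ℂ → ℂ) (hf : Differentiable ℂ f) (h0 : ∀ z, f z ≠ 0) :
    ∃ g : ℂ → ℂ, Differentiable ℂ g ∧ ∀ z, f z = Complex.exp (g z) := by
  have hd : Differentiable ℂ (fun z => deriv f z / f z) := by
    have h1 : Differentiable ℂ (deriv f) := hf.deriv
    exact h1.div hf h0
  obtain ⟨G, hG0, hG⟩ := hd.isExactOn_univ.with_val_at 0 (Complex.log (f 0))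
  have hG' : ∀ z, HasDerivAt G (deriv f z / f z) z := fun z => hG z (Set.mem_univ z)
  refine ⟨G, fun z => (hG' z).differentiableAt, ?_⟩
  have hk : ∀ z, HasDerivAt (fun z => f z * Complex.exp (-G z)) 0 z := by
    intro z
    have h2 := (hf z).hasDerivAt.mul ((hG' z).neg.cexp)
    have h3 : deriv f z * Complex.exp ((-G) z)
        + f z * (Complex.exp ((-G) z) * -(deriv f z / f z)) = 0 := by
      have := h0 z
      field_simp
      ring
    rw [h3] at h2
    exact h2
  have hc := is_const_of_deriv_eq_zero (fun z => (hk z).differentiableAt) (fun z => (hk z).deriv)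
  intro z
  have h3 := hc z 0
  simp only [hG0, Complex.exp_neg, Complex.exp_log (h0 0)] at h3
  rw [mul_inv_cancel₀ (h0 0)] at h3
  have := Complex.exp_ne_zero (G z)
  field_simp at h3
  exact h3

theorem lp_bloch_local (g : ℂ → ℂ) (hg : Differentiable ℂ g) (p : ℂ) (t : ℝ) (ht : 0 < t)
    (hp : deriv g p ≠ 0) (hb : ∀ z ∈ Metric.closedBall p t, ‖deriv g z‖ ≤ 2 * ‖deriv g p‖) :
    Metric.ball (g p) (‖deriv g p‖ * t / 32) ⊆ Set.range g := by
  set a := ‖deriv g p‖ with ha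
  have hd : Differentiable ℂ (deriv g) := hg.deriv
  have h2 : ∀ z ∈ Metric.closedBall p (t/2), ‖deriv (deriv g) z‖ ≤ 2 * a / (t/2) := by
    intro z hz
    refine Complex.norm_deriv_le_of_forall_mem_sphere_norm_le (by positivity) hd.diffContOnCl ?_
    intro w hw
    apply hb
    rw [Metric.mem_closedBall] at *
    rw [Metric.mem_sphere] at hw
    linarith [dist_triangle w z p]
  have h3 : ∀ z ∈ Metric.closedBall p (t/8), ‖deriv g z - deriv g p‖ ≤ a / 2 := by
    intro z hz
    have h4 := (convex_closedBall p (t/2)).norm_image_sub_le_of_norm_deriv_le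
      (fun x _ => hd x) h2 (x := p) (y := z) (Metric.mem_closedBall_self (by positivity))
      (Metric.closedBall_subset_closedBall (by linarith) hz)
    refine h4.trans ?_
    rw [mem_closedBall_iff_norm] at hz
    calc 2 * a / (t/2) * ‖z - p‖ ≤ 2 * a / (t/2) * (t/8) := by gcongr
      _ = a / 2 := by field_simp; ring
  have h5 : ∀ z ∈ Metric.sphere p (t/8), a * t / 16 ≤ ‖g z - g p‖ := by
    intro z hz
    have hD : ∀ x, HasDerivAt (fun x => g x - deriv g p * x) (deriv g x - deriv g p) x := by
      intro x
      simpa using! (hg x).hasDerivAt.sub ((hasDerivAt_id x).const_mul (deriv g p))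
    have h6 := (convex_closedBall p (t/8)).norm_image_sub_le_of_norm_hasDerivWithin_le
      (fun x _ => (hD x).hasDerivWithinAt) h3 (x := p) (y := z)
      (Metric.mem_closedBall_self (by positivity)) (Metric.sphere_subset_closedBall hz)
    rw [mem_sphere_iff_norm] at hz
    have h7 : ‖deriv g p * (z - p)‖ ≤ ‖g z - g p‖ +
        ‖(g z - deriv g p * z) - (g p - deriv g p * p)‖ := by
      refine le_trans (le_of_eq ?_) (norm_sub_le _ _)
      congr 1; ring
    rw [norm_mul, ← ha, hz] at h7
    rw [hz] at h6
    linarith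
  have h8 := DiffContOnCl.ball_subset_image_closedBall (z₀ := p) (r := t/8) (f := g)
    hg.diffContOnCl (by positivity) h5
    (((hg p).hasDerivAt.eventually_ne hp).frequently.filter_mono nhdsWithin_le_nhds)
  refine Set.Subset.trans ?_ (h8.trans (Set.image_subset_range _ _))
  apply Metric.ball_subset_ball
  linarith

theorem lp_bloch (g : ℂ → ℂ) (hg : Differentiable ℂ g) (z0 : ℂ) (h : deriv g z0 ≠ 0) (r : ℝ)
    (hr : 0 < r) : ∃ w, Metric.ball w r ⊆ Set.range g := by
  have ha0 : 0 < ‖deriv g z0‖ := norm_pos_iff.2 h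
  set R := 64 * r / ‖deriv g z0‖ with hR
  have hR0 : 0 < R := by positivity
  have hd : Differentiable ℂ (deriv g) := hg.deriv
  have hc : Continuous (deriv g) := hd.continuous
  obtain ⟨p, hp, hmax⟩ := (isCompact_closedBall z0 R).exists_isMaxOn
    ⟨z0, Metric.mem_closedBall_self hR0.le⟩
    (f := fun z => ‖deriv g z‖ * (R - dist z z0)) (by fun_prop)
  have hm : ∀ z ∈ Metric.closedBall z0 R,
    ‖deriv g z‖ * (R - dist z z0) ≤ ‖deriv g p‖ * (R - dist p z0) := fun z hz => hmax hz
  rw [Metric.mem_closedBall] at hp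
  have h1 := hm z0 (Metric.mem_closedBall_self hR0.le)
  rw [dist_self, sub_zero] at h1
  have h2 : ‖deriv g z0‖ * R = 64 * r := by rw [hR]; field_simp
  rw [h2] at h1
  have hpos : 0 < ‖deriv g p‖ * (R - dist p z0) := by linarith
  have hp0 : 0 < ‖deriv g p‖ := pos_of_mul_pos_left hpos (by linarith)
  have ht0 : 0 < R - dist p z0 := pos_of_mul_pos_right hpos hp0.le
  refine ⟨g p, Set.Subset.trans (Metric.ball_subset_ball ?_)
    (lp_bloch_local g hg p ((R - dist p z0)/2) (by positivity) (norm_pos_iff.1 hp0) ?_)⟩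
  · linarith
  · intro z hz
    rw [Metric.mem_closedBall] at hz
    have h3 := dist_triangle z p z0
    have h4 := hm z (by rw [Metric.mem_closedBall]; linarith)
    have h5 : ‖deriv g z‖ * ((R - dist p z0)/2) ≤ ‖deriv g z‖ * (R - dist z z0) := by
      gcongr; linarith
    have h6 : ‖deriv g z‖ * (R - dist p z0) ≤ (2 * ‖deriv g p‖) * (R - dist p z0) := by linarith
    exact le_of_mul_le_mul_right h6 ht0

theorem lp_cosh_nonneg (x : ℝ) (hx : 0 ≤ x) :
    ∃ y : ℝ, |y - x| ≤ 1 ∧ ∃ n : ℤ, Real.cosh y ^ 2 = n := by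
  have h1 : Real.cosh x ^ 2 + 1 ≤ Real.cosh (x + 1) ^ 2 := by
    have hs : 1 ≤ Real.sinh 1 := Real.self_le_sinh_iff.2 zero_le_one
    have hsx : 0 ≤ Real.sinh x := Real.sinh_nonneg_iff.2 hx
    have hcx : 1 ≤ Real.cosh x := Real.one_le_cosh x
    have hc2 := Real.cosh_sq 1
    rw [Real.cosh_add]
    have hc1 : 0 < Real.cosh 1 := Real.cosh_pos 1
    have h2 : 0 ≤ Real.sinh x * Real.sinh 1 := by positivity
    have h3 : Real.cosh x ^ 2 + 1 ≤ (Real.cosh x * Real.cosh 1) ^ 2 := by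
      rw [mul_pow, hc2]
      nlinarith [one_le_pow₀ hcx (n := 2), one_le_pow₀ hs (n := 2)]
    refine h3.trans ?_
    gcongr
    linarith
  have h2 := intermediate_value_Icc (show x ≤ x + 1 by linarith)
    (f := fun y => Real.cosh y ^ 2) (by fun_prop)
  obtain ⟨y, hy, hyn⟩ := h2 (show (⌈Real.cosh x ^ 2⌉ : ℝ) ∈ _ from
    ⟨Int.le_ceil _, (Int.ceil_lt_add_one _).le.trans h1⟩)
  exact ⟨y, by rw [abs_le]; constructor <;> linarith [hy.1, hy.2], _, hyn⟩

theorem lp_cosh (x : ℝ) : ∃ y : ℝ, |y - x| ≤ 1 ∧ ∃ n : ℤ, Real.cosh y ^ 2 = n := by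
  rcases le_total 0 x with h | h
  · exact lp_cosh_nonneg x h
  · obtain ⟨y, hy, n, hn⟩ := lp_cosh_nonneg (-x) (by linarith)
    refine ⟨-y, ?_, n, by rwa [Real.cosh_neg]⟩
    rw [abs_sub_comm]
    convert hy using 2
    ring

theorem lp_grid (w : ℂ) : ∃ v ∈ Metric.ball w 4, ∃ n : ℤ, Complex.cosh v ^ 2 = n := by
  obtain ⟨y, hy, n, hn⟩ := lp_cosh w.re
  set k : ℤ := round (w.im / Real.pi)
  have hk : |w.im / Real.pi - k| ≤ 1 / 2 := abs_sub_round _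
  have hk' : |(k : ℝ) * Real.pi - w.im| ≤ 2 := by
    have hpi := Real.pi_pos
    have : (k : ℝ) * Real.pi - w.im = - (w.im / Real.pi - k) * Real.pi := by field_simp; ring
    rw [this, abs_mul, abs_neg, abs_of_pos hpi]
    nlinarith [Real.pi_le_four]
  refine ⟨y + ((k * Real.pi : ℝ) : ℂ) * Complex.I, ?_, n, ?_⟩
  · rw [mem_ball_iff_norm]
    refine lt_of_le_of_lt (Complex.norm_le_abs_re_add_abs_im _) ?_
    simp only [Complex.sub_re, Complex.sub_im, Complex.add_re, Complex.add_im,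
      Complex.ofReal_re, Complex.ofReal_im, Complex.re_ofReal_mul, Complex.im_ofReal_mul,
      Complex.I_re, Complex.I_im]
    simp only [mul_zero, mul_one, add_zero, zero_add]
    linarith
  · rw [Complex.cosh_add, Complex.cosh_mul_I, Complex.sinh_mul_I, ← Complex.ofReal_sin,
      Real.sin_int_mul_pi, ← Complex.ofReal_cos, ← Complex.ofReal_cosh]
    have h1 : Real.cos (k * Real.pi) ^ 2 = 1 := by
      have := Real.sin_sq_add_cos_sq (k * Real.pi)
      rw [Real.sin_int_mul_pi] at this
      linarith
    have : (Real.cosh y * Real.cos (k * Real.pi)) ^ 2 = n := by rw [mul_pow, h1, hn, mul_one]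
    simp only [Complex.ofReal_zero, zero_mul, mul_zero, add_zero]
    exact_mod_cast this

/-- Little Picard theorem: an entire function omitting `0` and `1` is constant. -/
theorem little_picard (f : ℂ → ℂ) (hf : Differentiable ℂ f)
    (h0 : ∀ z : ℂ, f z ≠ 0) (h1 : ∀ z : ℂ, f z ≠ 1) :
    ∃ c : ℂ, ∀ z : ℂ, f z = c := by
  obtain ⟨L, hL, hfL⟩ := lp_log f hf h0
  have hpi : (2 * Real.pi * Complex.I : ℂ) ≠ 0 := Complex.two_pi_I_ne_zero
  set F : ℂ → ℂ := fun z => L z / (2 * Real.pi * Complex.I) with hF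
  have hFd : Differentiable ℂ F := hL.div_const _
  have hFn : ∀ z, ∀ n : ℤ, F z ≠ n := by
    intro z n h
    apply h1 z
    rw [hfL, Complex.exp_eq_one_iff]
    exact ⟨n, by rw [← h, hF]; field_simp⟩
  obtain ⟨A, hA, hFA⟩ := lp_log F hFd (fun z => by simpa using hFn z 0)
  obtain ⟨B, hB, hFB⟩ := lp_log (fun z => F z - 1) (hFd.sub_const 1)
    (fun z => by simpa [sub_ne_zero] using hFn z 1)
  set u : ℂ → ℂ := fun z => Complex.exp (A z / 2) with hu
  set v : ℂ → ℂ := fun z => Complex.exp (B z / 2) with hv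
  have hud : Differentiable ℂ u := (hA.div_const 2).cexp
  have hvd : Differentiable ℂ v := (hB.div_const 2).cexp
  have hu2 : ∀ z, u z ^ 2 = F z := by
    intro z
    rw [hFA, hu, ← Complex.exp_nat_mul]; congr 1; push_cast; ring
  have hv2 : ∀ z, v z ^ 2 = F z - 1 := by
    intro z
    rw [hFB, hv, ← Complex.exp_nat_mul]; congr 1; push_cast; ring
  have huv : ∀ z, (u z + v z) * (u z - v z) = 1 := by
    intro z; linear_combination hu2 z - hv2 z
  obtain ⟨g, hg, hgu⟩ := lp_log (fun z => u z + v z) (hud.add hvd)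
    (fun z h => by have := huv z; rw [h] at this; simp at this)
  have hcosh : ∀ z, Complex.cosh (g z) ^ 2 = F z := by
    intro z
    have h2 : Complex.exp (-g z) = u z - v z := by
      rw [Complex.exp_neg, ← hgu z]
      exact inv_eq_of_mul_eq_one_right (huv z)
    rw [Complex.cosh, h2, ← hgu z, ← hu2 z]
    ring
  have hg' : ∀ z, deriv g z = 0 := by
    by_contra! hne
    obtain ⟨z0, hz0⟩ := hne
    obtain ⟨w, hw⟩ := lp_bloch g hg z0 hz0 4 (by norm_num)
    obtain ⟨x, hx, n, hn⟩ := lp_grid w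
    obtain ⟨z, rfl⟩ := hw hx
    exact hFn z n (by rw [← hcosh, hn])
  have hgc := is_const_of_deriv_eq_zero hg hg'
  refine ⟨f 0, fun z => ?_⟩
  have h2 : F z = F 0 := by rw [← hcosh, ← hcosh, hgc z 0]
  have h3 : L z = L 0 := by
    simp only [hF] at h2
    field_simp at h2
    exact h2
  rw [hfL, hfL, h3]
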